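/- Let a transition system with valuation v be given, let 'terminal' be an atom such that v s terminal holds if and only if s ∈ T for every state s, and let g be any atom. Then for every n ∈ ℕ, the system does NOT globally satisfy nest(¬terminal ∨ ¬g, ∧, n) if and only if there exists an n-max valid sequence (S_0, …, S_m) such that S_m ∈ T and v S_m g holds. -/

import Mathlib

/-- Formulas of a finite-trace temporal logic over a type `α` of atoms. -/
inductive Formula (α : Type*) : Type _ where
  | atom : α → Formula α
  | and : Formula α → Formula α → Formula α
  | neg : Formula α → Formula α
  | next : Formula α → Formula α

namespace Formula

/-- Disjunction `φ₁ ∨ φ₂` abbreviates `¬(¬φ₁ ∧ ¬φ₂)`. -/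
def or {α : Type*} (f g : Formula α) : Formula α := neg (and (neg f) (neg g))

/-- The degree of a formula: maximal nesting depth of the weak-next operator. -/
def deg {α : Type*} : Formula α → ℕ
  | atom _ => 0
  | and f g => max f.deg g.deg
  | neg f => f.deg
  | next f => f.deg + 1

end Formula

/-- Satisfaction of a formula on the nonempty finite sequence `(σ i, …, σ m)`:
`Sat v σ m φ i` means `φ` holds on `(σ i, …, σ m)`. -/
def Sat {S α : Type*} (v : S → α → Prop) (σ : ℕ → S) (m : ℕ) : Formula α → ℕ → Prop
  | .atom a, i => v (σ i) a
  | .and f g, i => Sat v σ m f i ∧ Sat v σ m g i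
  | .neg f, i => ¬ Sat v σ m f i
  | .next f, i => i = m ∨ (i < m ∧ Sat v σ m f (i + 1))

/-- `nest(φ, ∨, n)`. -/
def nestOr {α : Type*} (φ : Formula α) : ℕ → Formula α
  | 0 => φ
  | n + 1 => φ.or (Formula.next (nestOr φ n))

/-- `nest(φ, ∧, n)`. -/
def nestAnd {α : Type*} (φ : Formula α) : ℕ → Formula α
  | 0 => φ
  | n + 1 => Formula.and φ (Formula.next (nestAnd φ n))

/-- A transition system: states, step relation, terminal states, initial state. -/
structure TransSys (S : Type*) where
  R : S → S → Prop
  T : Set S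
  init : S

/-- The set of blocked states: states with no successor. -/
def TransSys.B {S : Type*} (ts : TransSys S) : Set S := {s | ∀ s', ¬ ts.R s s'}

/-- `(σ 0, …, σ m)` is a valid sequence. -/
def TransSys.Valid {S : Type*} (ts : TransSys S) (σ : ℕ → S) (m : ℕ) : Prop :=
  σ 0 = ts.init ∧ (∀ i < m, ts.R (σ i) (σ (i + 1))) ∧ (∀ i < m, σ i ∉ ts.T)

/-- `(σ 0, …, σ m)` is an `n`-max valid sequence. -/
def TransSys.NMax {S : Type*} (ts : TransSys S) (n : ℕ) (σ : ℕ → S) (m : ℕ) : Prop :=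
  ts.Valid σ m ∧ (m = n ∨ (m < n ∧ σ m ∈ ts.T ∪ ts.B))

/-- The system globally satisfies `φ`: every `deg(φ)`-max valid sequence satisfies `φ`. -/
def GlobSat {S α : Type*} (ts : TransSys S) (v : S → α → Prop) (φ : Formula α) : Prop :=
  ∀ σ m, ts.NMax φ.deg σ m → Sat v σ m φ 0

/-!
The formula `nestAnd φ n` asserts `φ` at each of the first `n + 1` positions of the sequence, so a
failure of global satisfaction is an `n`-max valid sequence with a position where both `terminal`
and `g` hold. A valid sequence has no terminal state before its last position, hence that position
is the last one; and it is among the first `n + 1` because an `n`-max sequence has `m ≤ n`.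
-/

theorem deg_nestAnd {α : Type*} (φ : Formula α) (n : ℕ) :
    (nestAnd φ n).deg = φ.deg + n := by
  induction n with
  | zero => rfl
  | succ n ih =>
    simp only [nestAnd, Formula.deg, ih]
    omega

section Satisfaction

variable {S α : Type*} {v : S → α → Prop} {σ : ℕ → S} {m i : ℕ}

theorem sat_or_iff {φ ψ : Formula α} :
    Sat v σ m (φ.or ψ) i ↔ Sat v σ m φ i ∨ Sat v σ m ψ i :=
  or_iff_not_and_not.symm

theorem sat_next_iff {φ : Formula α} (hi : i ≤ m) :
    Sat v σ m φ.next i ↔ (i < m → Sat v σ m φ (i + 1)) := by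
  simp only [Sat]
  grind

theorem sat_nestAnd_iff {φ : Formula α} {n : ℕ} (hi : i ≤ m) :
    Sat v σ m (nestAnd φ n) i ↔ ∀ k ≤ n, i + k ≤ m → Sat v σ m φ (i + k) := by
  induction n generalizing i with
  | zero => simp [nestAnd, hi]
  | succ n ih =>
    have index_shift (k : ℕ) : i + 1 + k = i + (k + 1) := by omega
    calc Sat v σ m (nestAnd φ (n + 1)) i
        ↔ Sat v σ m φ i ∧ (i < m → Sat v σ m (nestAnd φ n) (i + 1)) :=
          and_congr_right' (sat_next_iff hi)
      _ ↔ Sat v σ m φ i ∧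
            (i < m → ∀ k ≤ n, i + (k + 1) ≤ m → Sat v σ m φ (i + (k + 1))) :=
          and_congr_right' (forall_congr' fun hlt => by simp only [ih hlt, index_shift])
      _ ↔ ∀ k ≤ n + 1, i + k ≤ m → Sat v σ m φ (i + k) := by
          constructor
          · rintro ⟨head, tail⟩ (_ | k) hk hkm
            · exact head
            · exact tail (by omega) k (by omega) hkm
          · exact fun h => ⟨h 0 (by omega) hi, fun _ k hk => h (k + 1) (by omega)⟩

end Satisfaction

theorem not_globSat_nestAnd_iff {S α : Type*} {ts : TransSys S} {v : S → α → Prop}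
    {φ : Formula α} {n : ℕ} :
    ¬ GlobSat ts v (nestAnd φ n) ↔
      ∃ σ m, ts.NMax (φ.deg + n) σ m ∧ ∃ i ≤ n, i ≤ m ∧ ¬ Sat v σ m φ i := by
  simp only [GlobSat, deg_nestAnd, sat_nestAnd_iff (Nat.zero_le _), Nat.zero_add, not_forall,
    exists_prop]

namespace TransSys

variable {S : Type*} {ts : TransSys S} {σ : ℕ → S} {n m i : ℕ}

theorem NMax.le (h : ts.NMax n σ m) : m ≤ n :=
  h.2.elim Eq.le fun hm => hm.1.le

theorem Valid.eq_of_mem_T (h : ts.Valid σ m) (hi : i ≤ m) (hT : σ i ∈ ts.T) : i = m :=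
  hi.eq_of_not_lt fun hlt => h.2.2 i hlt hT

theorem NMax.exists_mem_T_and_iff {p : S → Prop} (h : ts.NMax n σ m) :
    (∃ i ≤ n, i ≤ m ∧ σ i ∈ ts.T ∧ p (σ i)) ↔ σ m ∈ ts.T ∧ p (σ m) := by
  refine ⟨?_, fun hm => ⟨m, h.le, le_rfl, hm⟩⟩
  rintro ⟨i, -, him, hT, hp⟩
  obtain rfl := h.1.eq_of_mem_T him hT
  exact ⟨hT, hp⟩

end TransSys

/-- the system does not globally satisfy nest(¬terminal ∨ ¬g, ∧, n) iff
some n-max valid sequence ends in a terminal state where g holds. -/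
theorem stmt_11 {S α : Type*} (ts : TransSys S) (v : S → α → Prop) (terminal g : α)
    (hv : ∀ s, v s terminal ↔ s ∈ ts.T) (n : ℕ) :
    ¬ GlobSat ts v
        (nestAnd (Formula.or (Formula.neg (Formula.atom terminal))
          (Formula.neg (Formula.atom g))) n) ↔
      ∃ (σ : ℕ → S) (m : ℕ), ts.NMax n σ m ∧ σ m ∈ ts.T ∧ v (σ m) g := by
  have not_sat_iff : ∀ σ m i,
      ¬ Sat v σ m (.or (.neg (.atom terminal)) (.neg (.atom g))) i ↔
        σ i ∈ ts.T ∧ v (σ i) g := by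
    intro σ m i
    simp only [sat_or_iff, Sat, hv, not_or, not_not]
  have deg_eq_zero :
      (Formula.or (.neg (.atom terminal)) (.neg (.atom g))).deg = 0 := rfl
  simp only [not_globSat_nestAnd_iff, deg_eq_zero, Nat.zero_add, not_sat_iff]
  exact exists₂_congr fun σ m =>
    and_congr_right fun h => h.exists_mem_T_and_iff (p := (v · g))
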